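/- Let A > 1. There exists a constant C > 0, depending only on A, such that for every radial non-increasing weight u on 𝔻 satisfying (LOG 1) with constant A, every holomorphic f on 𝔻 with u(z)|f(z)| ≤ 1 for all z ∈ 𝔻, every integer t ≥ 0 and every z ∈ 𝔻 with r_t ≤ |z| ≤ r_{t+1}, one has Σ_{κ=t+2}^{∞} |f(r_{κ+1}z) − f(r_κ z)| ≤ C/u(z). -/

import Mathlib

noncomputable section

open Complex

/-- The open unit disc in ℂ. -/
def uD : Set ℂ := {z : ℂ | ‖z‖ < 1}

/-- Holomorphic on the unit disc. -/
def Holo (f : ℂ → ℂ) : Prop := DifferentiableOn ℂ f uD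

/-- A weight on 𝔻: continuous and strictly positive. -/
def IsWeight (v : ℂ → ℝ) : Prop :=
  ContinuousOn v uD ∧ ∀ z ∈ uD, 0 < v z

/-- Radial weight. -/
def Radial (v : ℂ → ℝ) : Prop :=
  ∀ z ∈ uD, ∀ w ∈ uD, ‖z‖ = ‖w‖ → v z = v w

/-- Non-increasing in the modulus. -/
def NonInc (v : ℂ → ℝ) : Prop :=
  ∀ z ∈ uD, ∀ w ∈ uD, ‖z‖ ≤ ‖w‖ → v w ≤ v z

/-- r₀ = 0, r_κ = 1 - 2^(-2^κ) for κ ≥ 1. -/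
def rseq (κ : ℕ) : ℝ := if κ = 0 then 0 else 1 - 1 / 2 ^ (2 ^ κ)

/-- Condition (LOG 1) for a single radial weight. -/
def Log1 (A : ℝ) (v : ℂ → ℝ) : Prop :=
  ∀ κ : ℕ, v (rseq κ : ℂ) ≤ A * v (rseq (κ + 1) : ℂ)

/-- Condition (LOG 2) for a single radial weight. -/
def Log2 (a : ℝ) (v : ℂ → ℝ) : Prop :=
  ∀ κ : ℕ, v (rseq (κ + 1) : ℂ) ≤ a * v (rseq κ : ℂ)

/-- The weight tends to 0 as |z| → 1. -/
def VanishAtOne (v : ℂ → ℝ) : Prop :=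
  ∀ ε > 0, ∃ r : ℝ, r < 1 ∧ ∀ z ∈ uD, r ≤ ‖z‖ → v z ≤ ε

/-- Associated growth function w~ of a growth condition w. -/
def growthTilde (w : ℂ → ℝ) (z : ℂ) : ℝ :=
  sSup {t : ℝ | ∃ g : ℂ → ℂ, Holo g ∧ (∀ x ∈ uD, ‖g x‖ ≤ w x) ∧ t = ‖g z‖}

/-- Associated weight ṽ = 1/(1/v)~. -/
def assocWeight (v : ℂ → ℝ) (z : ℂ) : ℝ := (growthTilde (fun x => 1 / v x) z)⁻¹

/-- Monotonicity of the double sequence: decreasing in n, increasing in N. -/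
def MonoSeq (a : ℕ → ℕ → ℂ → ℝ) : Prop :=
  ∀ N n, ∀ z ∈ uD, a N (n + 1) z ≤ a N n z ∧ a N n z ≤ a (N + 1) n z

/-- Condition (LOG) for a double sequence with constants 0 < a < 1 < A. -/
def SeqLOG (aa A : ℝ) (a : ℕ → ℕ → ℂ → ℝ) : Prop :=
  ∀ N n, Radial (a N n) ∧ NonInc (a N n) ∧ VanishAtOne (a N n) ∧
    Log1 A (a N n) ∧ Log2 aa (a N n)

/-- Condition (Q). -/
def CondQ (a : ℕ → ℕ → ℂ → ℝ) : Prop :=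
  ∀ N, ∃ M ≥ N, ∃ n, ∀ K ≥ M, ∀ m, ∀ ε > 0, ∃ k, ∃ S > 0,
    ∀ z ∈ uD, 1 / a M m z ≤ max (ε / a N n z) (S / a K k z)

/-- Condition (wQ). -/
def CondwQ (a : ℕ → ℕ → ℂ → ℝ) : Prop :=
  ∀ N, ∃ M ≥ N, ∃ n, ∀ K ≥ M, ∀ m, ∃ k, ∃ S > 0,
    ∀ z ∈ uD, 1 / a M m z ≤ max (S / a N n z) (S / a K k z)

/-- Condition (Q)~. -/
def CondQTilde (a : ℕ → ℕ → ℂ → ℝ) : Prop :=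
  ∀ N, ∃ M ≥ N, ∃ n, ∀ K ≥ M, ∀ m, ∀ ε > 0, ∃ k, ∃ S > 0,
    ∀ z ∈ uD, growthTilde (fun x => 1 / a M m x) z ≤
      growthTilde (fun x => max (ε / a N n x) (S / a K k x)) z

/-- Pointwise maximum max_{N=1,…,L} a_{N,n(N)}. -/
def finMax (a : ℕ → ℕ → ℂ → ℝ) (nn : ℕ → ℕ) (L : ℕ) (z : ℂ) : ℝ :=
  sSup {t : ℝ | ∃ N, 1 ≤ N ∧ N ≤ L ∧ t = a N (nn N) z}

/-- Condition (B). -/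
def CondB (a : ℕ → ℕ → ℂ → ℝ) : Prop :=
  ∀ nn : ℕ → ℕ, ∃ m, ∀ M, ∃ L, 1 ≤ L ∧ ∃ c > 0,
    ∀ z ∈ uD, a M m z ≤ c * finMax a nn L z

/-- Condition (B)~. -/
def CondBTilde (a : ℕ → ℕ → ℂ → ℝ) : Prop :=
  ∀ nn : ℕ → ℕ, ∃ m, ∀ M, ∃ L, 1 ≤ L ∧ ∃ c > 0,
    ∀ z ∈ uD, assocWeight (a M m) z ≤ c * assocWeight (finMax a nn L) z

/-- A weight is essential. -/
def Essential (v : ℂ → ℝ) : Prop :=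
  ∃ C > 0, ∀ z ∈ uD,
    growthTilde (fun x => 1 / v x) z ≤ 1 / v z ∧
    1 / v z ≤ C * growthTilde (fun x => 1 / v x) z

/-- Condition (Σ). -/
def CondSigma (a : ℕ → ℕ → ℂ → ℝ) : Prop :=
  ∀ N, ∃ K ≥ N, ∀ k, ∃ n ≥ k, ∀ ε > 0, ∃ Q : Set ℂ,
    IsCompact Q ∧ Q ⊆ uD ∧ ∀ z ∈ uD \ Q, a N n z / a K k z ≤ ε

/-- The Banach space Ha(𝔻) as a set of functions. -/
def HaSet (v : ℂ → ℝ) : Set (ℂ → ℂ) :=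
  {f | Holo f ∧ ∃ C : ℝ, ∀ z ∈ uD, v z * ‖f z‖ ≤ C}

/-!
Since `1 - r_{t+2} = (1 - r_{t+1})²`, the whole segment from `r_{t+2}` to `1` is shorter than the
gap `r_{t+2} - r_{t+1}`. By (LOG 1), `|f|` is at most `A² / u z` on the disc of radius `r_{t+2}`,
so by Cauchy's estimate `f` is Lipschitz on the disc of radius `r_{t+1}`, which contains all the
points `r_κ z`, with constant `A² / u z` divided by that gap. The increments `r_{κ+1} - r_κ`
telescope to at most `1 - r_{t+2}`, and the gap cancels.
-/

open Metric

theorem summable_and_tsum_le_of_forall_le_sub {a s : ℕ → ℝ} {b : ℝ} (ha_nonneg : ∀ j, 0 ≤ a j)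
    (ha_le : ∀ j, a j ≤ s (j + 1) - s j) (hs : ∀ j, s j ≤ b) :
    Summable a ∧ ∑' j, a j ≤ b - s 0 := by
  have sum_le : ∀ n, ∑ j ∈ Finset.range n, a j ≤ b - s 0 := fun n ↦
    calc ∑ j ∈ Finset.range n, a j
        ≤ ∑ j ∈ Finset.range n, (s (j + 1) - s j) := Finset.sum_le_sum fun j _ ↦ ha_le j
      _ = s n - s 0 := Finset.sum_range_sub s n
      _ ≤ b - s 0 := sub_le_sub_right (hs n) _
  exact ⟨summable_of_sum_range_le ha_nonneg sum_le, Real.tsum_le_of_sum_range_le ha_nonneg sum_le⟩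

section Cauchy

variable {E : Type*} [NormedAddCommGroup E] [NormedSpace ℂ E] {f : ℂ → E} {r R M : ℝ}

theorem norm_sub_le_of_forall_mem_closedBall_norm_le {c z w : ℂ} (hrR : r < R)
    (hf : DiffContOnCl ℂ f (ball c R)) (hM : ∀ ζ ∈ closedBall c R, ‖f ζ‖ ≤ M)
    (hz : z ∈ closedBall c r) (hw : w ∈ closedBall c r) :
    ‖f w - f z‖ ≤ M / (R - r) * ‖w - z‖ := by
  have hdiff : ∀ ζ ∈ closedBall c r, DifferentiableAt ℂ f ζ := fun ζ hζ ↦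
    hf.differentiableAt isOpen_ball (closedBall_subset_ball hrR hζ)
  have hderiv : ∀ ζ ∈ closedBall c r, ‖deriv f ζ‖ ≤ M / (R - r) := by
    intro ζ hζ
    have hdist : R - r + dist ζ c ≤ R := by linarith [mem_closedBall.1 hζ]
    exact norm_deriv_le_of_forall_mem_sphere_norm_le (sub_pos.2 hrR)
      (hf.mono (ball_subset_ball' hdist))
      fun ξ hξ ↦ hM ξ (closedBall_subset_closedBall' hdist (sphere_subset_closedBall hξ))
  exact (convex_closedBall c r).norm_image_sub_le_of_norm_deriv_le hdiff hderiv hz hw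

theorem summable_and_tsum_norm_sub_along_radius_le {s : ℕ → ℝ} {z : ℂ} (hrR : r < R)
    (hf : DiffContOnCl ℂ f (ball 0 R)) (hM : ∀ ζ ∈ closedBall 0 R, ‖f ζ‖ ≤ M) (hz : ‖z‖ ≤ r)
    (hs_mono : Monotone s) (hs_nonneg : ∀ j, 0 ≤ s j) (hs_le : ∀ j, s j ≤ 1) :
    Summable (fun j ↦ ‖f (s (j + 1) * z) - f (s j * z)‖) ∧
      ∑' j, ‖f (s (j + 1) * z) - f (s j * z)‖ ≤ M / (R - r) * ‖z‖ * (1 - s 0) := by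
  have hmem : ∀ j, (s j : ℂ) * z ∈ closedBall 0 r := fun j ↦ by
    rw [mem_closedBall_zero_iff, norm_mul, norm_real, Real.norm_of_nonneg (hs_nonneg j)]
    exact (mul_le_of_le_one_left (norm_nonneg z) (hs_le j)).trans hz
  have hr : 0 ≤ r := (norm_nonneg z).trans hz
  have hM_nonneg : 0 ≤ M :=
    (norm_nonneg _).trans (hM 0 (mem_closedBall_self (hr.trans hrR.le)))
  have hL : 0 ≤ M / (R - r) * ‖z‖ :=
    mul_nonneg (div_nonneg hM_nonneg (sub_nonneg.2 hrR.le)) (norm_nonneg z)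
  have hincrement : ∀ j, ‖f (s (j + 1) * z) - f (s j * z)‖ ≤
      M / (R - r) * ‖z‖ * s (j + 1) - M / (R - r) * ‖z‖ * s j := fun j ↦
    calc ‖f (s (j + 1) * z) - f (s j * z)‖
        ≤ M / (R - r) * ‖(s (j + 1) : ℂ) * z - s j * z‖ :=
          norm_sub_le_of_forall_mem_closedBall_norm_le hrR hf hM (hmem j) (hmem (j + 1))
      _ = M / (R - r) * ((s (j + 1) - s j) * ‖z‖) := by
          rw [← sub_mul, norm_mul, ← ofReal_sub,
            norm_real, Real.norm_of_nonneg (sub_nonneg.2 (hs_mono j.le_succ))]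
      _ = M / (R - r) * ‖z‖ * s (j + 1) - M / (R - r) * ‖z‖ * s j := by ring
  rw [mul_one_sub]
  exact summable_and_tsum_le_of_forall_le_sub (fun _ ↦ norm_nonneg _) hincrement
    fun j ↦ mul_le_of_le_one_right hL (hs_le j)

end Cauchy

theorem rseq_lt_one (n : ℕ) : rseq n < 1 := by
  unfold rseq
  split_ifs
  · exact one_pos
  · exact sub_lt_self 1 (by positivity)

theorem one_sub_rseq_add_two (n : ℕ) : 1 - rseq (n + 2) = (1 - rseq (n + 1)) ^ 2 := by
  simp only [rseq, Nat.add_eq_zero_iff, one_ne_zero, two_ne_zero, and_false, if_false,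
    sub_sub_cancel]
  rw [one_div_pow, ← pow_mul, ← pow_succ]

theorem rseq_one : rseq 1 = 3 / 4 := by
  norm_num [rseq]

theorem three_quarters_le_rseq_succ (n : ℕ) : 3 / 4 ≤ rseq (n + 1) := by
  induction n with
  | zero => exact rseq_one.ge
  | succ n ih => nlinarith [one_sub_rseq_add_two n, rseq_lt_one (n + 1)]

theorem rseq_strictMono : StrictMono rseq := by
  refine strictMono_nat_of_lt_succ fun n ↦ ?_
  rcases n with _ | n
  · norm_num [rseq]
  · nlinarith [one_sub_rseq_add_two n, three_quarters_le_rseq_succ n, rseq_lt_one (n + 1)]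

theorem rseq_nonneg (n : ℕ) : 0 ≤ rseq n :=
  rseq_strictMono.monotone n.zero_le

theorem one_sub_rseq_add_two_le_gap (n : ℕ) :
    1 - rseq (n + 2) ≤ rseq (n + 2) - rseq (n + 1) := by
  nlinarith [one_sub_rseq_add_two n, three_quarters_le_rseq_succ n, rseq_lt_one (n + 1)]

theorem norm_rseq (n : ℕ) : ‖(rseq n : ℂ)‖ = rseq n :=
  (norm_real _).trans (Real.norm_of_nonneg (rseq_nonneg n))

theorem mem_uD_of_norm_le_rseq {z : ℂ} {n : ℕ} (hz : ‖z‖ ≤ rseq n) : z ∈ uD :=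
  hz.trans_lt (rseq_lt_one n)

theorem rseq_mem_uD (n : ℕ) : (rseq n : ℂ) ∈ uD :=
  mem_uD_of_norm_le_rseq (norm_rseq n).le

section Weights

variable {A : ℝ} {u : ℂ → ℝ} {z w : ℂ} {t k : ℕ}

theorem Log1.constant_nonneg (hlog : Log1 A u) (hpos : ∀ ζ ∈ uD, 0 < u ζ) : 0 ≤ A :=
  (pos_of_mul_pos_left ((hpos _ (rseq_mem_uD 0)).trans_le (hlog 0))
    (hpos _ (rseq_mem_uD 1)).le).le

theorem Log1.apply_rseq_le_pow_mul (hlog : Log1 A u) (hA : 0 ≤ A) (t k : ℕ) :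
    u (rseq t) ≤ A ^ k * u (rseq (t + k)) := by
  induction k with
  | zero => simp
  | succ k ih =>
    calc u (rseq t) ≤ A ^ k * u (rseq (t + k)) := ih
      _ ≤ A ^ k * (A * u (rseq (t + k + 1))) := by gcongr; exact hlog (t + k)
      _ = A ^ (k + 1) * u (rseq (t + (k + 1))) := by rw [pow_succ, mul_assoc, add_assoc]

theorem Log1.apply_le_pow_mul_apply (hlog : Log1 A u) (hA : 0 ≤ A) (hu : NonInc u)
    (hz : z ∈ uD) (htz : rseq t ≤ ‖z‖) (hw : ‖w‖ ≤ rseq (t + k)) :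
    u z ≤ A ^ k * u w :=
  calc u z ≤ u (rseq t) := hu _ (rseq_mem_uD t) z hz ((norm_rseq t).trans_le htz)
    _ ≤ A ^ k * u (rseq (t + k)) := hlog.apply_rseq_le_pow_mul hA t k
    _ ≤ A ^ k * u w := by
      gcongr
      exact hu w (mem_uD_of_norm_le_rseq hw) _ (rseq_mem_uD _) (hw.trans_eq (norm_rseq _).symm)

theorem Log1.norm_le_pow_div {E : Type*} [NormedAddCommGroup E] {f : ℂ → E} (hlog : Log1 A u)
    (hpos : ∀ ζ ∈ uD, 0 < u ζ) (hu : NonInc u) (hf : ∀ ζ ∈ uD, u ζ * ‖f ζ‖ ≤ 1)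
    (hz : z ∈ uD) (htz : rseq t ≤ ‖z‖) (hw : ‖w‖ ≤ rseq (t + k)) :
    ‖f w‖ ≤ A ^ k / u z := by
  have hA : 0 ≤ A := hlog.constant_nonneg hpos
  rw [le_div_iff₀' (hpos z hz)]
  calc u z * ‖f w‖ ≤ A ^ k * u w * ‖f w‖ := by
        gcongr
        exact hlog.apply_le_pow_mul_apply hA hu hz htz hw
    _ = A ^ k * (u w * ‖f w‖) := mul_assoc _ _ _
    _ ≤ A ^ k := mul_le_of_le_one_right (pow_nonneg hA k) (hf w (mem_uD_of_norm_le_rseq hw))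

end Weights

theorem tail_sum_estimate_general {E : Type*} [NormedAddCommGroup E] [NormedSpace ℂ E]
    {A : ℝ} {u : ℂ → ℝ} {f : ℂ → E} {t : ℕ} {z : ℂ} (hpos : ∀ ζ ∈ uD, 0 < u ζ) (hu : NonInc u)
    (hlog : Log1 A u) (hf : DifferentiableOn ℂ f uD) (hfu : ∀ ζ ∈ uD, u ζ * ‖f ζ‖ ≤ 1)
    (htz : rseq t ≤ ‖z‖) (hzt : ‖z‖ ≤ rseq (t + 1)) :
    Summable (fun j : ℕ ↦
        ‖f ((rseq (t + 2 + j + 1) : ℂ) * z) - f ((rseq (t + 2 + j) : ℂ) * z)‖) ∧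
      ∑' j : ℕ, ‖f ((rseq (t + 2 + j + 1) : ℂ) * z) - f ((rseq (t + 2 + j) : ℂ) * z)‖ ≤
        A ^ 2 / u z := by
  have hz : z ∈ uD := mem_uD_of_norm_le_rseq hzt
  have hrR : rseq (t + 1) < rseq (t + 2) := rseq_strictMono (t + 1).lt_succ_self
  have hM : ∀ ζ ∈ closedBall 0 (rseq (t + 2)), ‖f ζ‖ ≤ A ^ 2 / u z := fun ζ hζ ↦
    hlog.norm_le_pow_div hpos hu hfu hz htz (mem_closedBall_zero_iff.1 hζ)
  have hf_disc : DiffContOnCl ℂ f (ball 0 (rseq (t + 2))) :=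
    (hf.mono fun ζ hζ ↦ mem_uD_of_norm_le_rseq (mem_closedBall_zero_iff.1 hζ)).diffContOnCl_ball
      subset_rfl
  obtain ⟨hsummable, htsum⟩ := summable_and_tsum_norm_sub_along_radius_le
    (s := fun j ↦ rseq (t + 2 + j)) hrR hf_disc hM hzt
    (fun i j hij ↦ rseq_strictMono.monotone (Nat.add_le_add_left hij _))
    (fun _ ↦ rseq_nonneg _) (fun _ ↦ (rseq_lt_one _).le)
  have hgap : 0 < rseq (t + 2) - rseq (t + 1) := sub_pos.2 hrR
  have hM_nonneg : 0 ≤ A ^ 2 / u z := div_nonneg (sq_nonneg A) (hpos z hz).le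
  refine ⟨hsummable, htsum.trans ?_⟩
  calc A ^ 2 / u z / (rseq (t + 2) - rseq (t + 1)) * ‖z‖ * (1 - rseq (t + 2))
      ≤ A ^ 2 / u z / (rseq (t + 2) - rseq (t + 1)) * 1 * (rseq (t + 2) - rseq (t + 1)) := by
        gcongr A ^ 2 / u z / _ * ?_ * ?_
        · exact sub_nonneg.2 (rseq_lt_one _).le
        · exact le_of_lt hz
        · exact one_sub_rseq_add_two_le_gap t
    _ = A ^ 2 / u z := by rw [mul_one, div_mul_cancel₀ _ hgap.ne']

/-- tail sum estimate Σ_{κ=t+2}^∞ |f(r_{κ+1}z) − f(r_κ z)| ≤ C/u(z)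
with C depending only on A. -/
theorem tail_sum_estimate (A : ℝ) (hA : 1 < A) :
    ∃ C > 0, ∀ u : ℂ → ℝ, IsWeight u → Radial u → NonInc u → Log1 A u →
      ∀ f : ℂ → ℂ, Holo f → (∀ z ∈ uD, u z * ‖f z‖ ≤ 1) →
      ∀ t : ℕ, ∀ z ∈ uD, rseq t ≤ ‖z‖ → ‖z‖ ≤ rseq (t + 1) →
        ∑' j : ℕ, ‖f ((rseq (t + 2 + j + 1) : ℂ) * z) -
          f ((rseq (t + 2 + j) : ℂ) * z)‖ ≤ C / u z := by
  exact ⟨A ^ 2, pow_pos (one_pos.trans hA) 2, fun u hu _ hni hlog f hf hfu t z _ htz hzt ↦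
    (tail_sum_estimate_general hu.2 hni hlog hf hfu htz hzt).2⟩
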